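/- Let f : Q0 = [0,1]^n → ℝ be integrable with ∫_{Q0} f = 0 and finite dyadic BMO seminorm ‖f‖_{*,D}, and let f_d be its nonincreasing rearrangement. Then for every t ∈ (0,1], f_d(t) ≤ 2^{n−1} e ‖f‖_{*,D} · ln(e/t); i.e. the bound f_d(t) ≤ (‖f‖_{*,D}/b) ln(B/t) holds with b = 1/(2^{n−1}e) and B = e. -/

import Mathlib

open MeasureTheory Set Real

noncomputable section

/-- The unit cube `Q₀ = [0,1]ⁿ` in `ℝⁿ`. -/
def Q0 (n : ℕ) : Set (Fin n → ℝ) := Set.Icc 0 1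

/-- The integral average `f_Q = (1/|Q|) ∫_Q f` of `f` over `Q`. -/
def avgOn {n : ℕ} (f : (Fin n → ℝ) → ℝ) (Q : Set (Fin n → ℝ)) : ℝ :=
  (volume Q).toReal⁻¹ * ∫ x in Q, f x

/-- The mean oscillation `Ω(f,Q) = (1/|Q|) ∫_Q |f - f_Q|` of `f` over `Q`. -/
def oscOn {n : ℕ} (f : (Fin n → ℝ) → ℝ) (Q : Set (Fin n → ℝ)) : ℝ :=
  (volume Q).toReal⁻¹ * ∫ x in Q, |f x - avgOn f Q|

/-- `Q` is a dyadic subcube of `[0,1]ⁿ` of side length `2⁻ᵏ`,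
i.e. `Q = ∏ᵢ [mᵢ 2⁻ᵏ, (mᵢ+1) 2⁻ᵏ]` with `0 ≤ mᵢ < 2ᵏ`. -/
def IsDyadicSide (n k : ℕ) (Q : Set (Fin n → ℝ)) : Prop :=
  ∃ m : Fin n → ℕ, (∀ i, m i < 2 ^ k) ∧
    Q = Set.Icc (fun i => (m i : ℝ) / 2 ^ k) (fun i => ((m i : ℝ) + 1) / 2 ^ k)

/-- `Q` belongs to the family `𝒟` of dyadic subcubes of `[0,1]ⁿ`. -/
def IsDyadic (n : ℕ) (Q : Set (Fin n → ℝ)) : Prop := ∃ k, IsDyadicSide n k Q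

/-- One-dimensional integral average `g_J` over a set `J ⊆ ℝ`. -/
def avgI (g : ℝ → ℝ) (J : Set ℝ) : ℝ := (volume J).toReal⁻¹ * ∫ u in J, g u

/-- One-dimensional mean oscillation `Ω(g,J)` over a set `J ⊆ ℝ`. -/
def oscI (g : ℝ → ℝ) (J : Set ℝ) : ℝ :=
  (volume J).toReal⁻¹ * ∫ u in J, |g u - avgI g J|

/-- `g : (0,1] → ℝ` is the nonincreasing, left-continuous rearrangement of
`f : [0,1]ⁿ → ℝ`, i.e. it is nonincreasing, left continuous and equimeasurable with `f`. -/
def IsRearrangement {n : ℕ} (f : (Fin n → ℝ) → ℝ) (g : ℝ → ℝ) : Prop :=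
  AntitoneOn g (Set.Ioc 0 1) ∧
  (∀ t ∈ Set.Ioc (0:ℝ) 1, ContinuousWithinAt g (Set.Iio t) t) ∧
  ∀ lam : ℝ, volume {t ∈ Set.Ioc (0:ℝ) 1 | lam < g t} = volume {x ∈ Q0 n | lam < f x}

/-- The Hardy average `F(t) = (1/t) ∫_0^t g(u) du`. -/
def hardyAvg (g : ℝ → ℝ) (t : ℝ) : ℝ := t⁻¹ * ∫ u in Set.Ioc (0:ℝ) t, g u

/-- The Gurov–Reshetnyak modulus
`v(f;σ) = sup { Ω(f,Q)/f_Q : Q ∈ 𝒟, ℓ(Q) ≤ σ, f_Q > 0 }` (equal to `0` if no such `Q` exists,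
by the convention `sSup ∅ = 0` in `ℝ`). -/
def vGR {n : ℕ} (f : (Fin n → ℝ) → ℝ) (σ : ℝ) : ℝ :=
  sSup {r : ℝ | ∃ k Q, IsDyadicSide n k Q ∧ ((2:ℝ) ^ k)⁻¹ ≤ σ ∧
    0 < avgOn f Q ∧ r = oscOn f Q / avgOn f Q}

/-- `f` satisfies the dyadic Gurov–Reshetnyak condition `f ∈ GR_𝒟(Q₀,ε)`:
`f : Q₀ → [0,∞)` is integrable and `Ω(f,Q) ≤ ε f_Q` for every dyadic cube `Q`. -/
def GRcond {n : ℕ} (f : (Fin n → ℝ) → ℝ) (ε : ℝ) : Prop :=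
  IntegrableOn f (Q0 n) ∧ (∀ x ∈ Q0 n, 0 ≤ f x) ∧
    ∀ Q, IsDyadic n Q → oscOn f Q ≤ ε * avgOn f Q

/-!
Fix a level `α` at least the mean of `f`. Each maximal cell having a child with mean above `α`
itself has mean at most `α`, so the oscillation bound gives `∫ (f - α)⁺ ≤ M/2 · |Q|` on it, while
a child of measure at least `|Q| / 2ⁿ` lies in the set `E` where some cell mean exceeds `α`. By
Lebesgue differentiation `f ≤ α` a.e. elsewhere, and summation gives
`∫ (f - α)⁺ ≤ c |E|` with `c = 2ⁿ M / 2`. On the other hand `E` is a union of cells of mean above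
`α`, so `(α - a) |E| ≤ ∫ (f - a)⁺` for every `a`. With `α - a = e c`, raising the level by `e c`
thus divides `∫ (f - a)⁺` by `e`; iterating and applying Chebyshev's inequality gives the logarithm.
Nothing but the nesting of the cells, the doubling `|Q| ≤ 2ⁿ |child|` and the differentiation
property is used, so the argument works for nested partitions of a finite measure space.
-/

open Filter Topology

section Excess

variable {X : Type*} [MeasurableSpace X] {μ : Measure X} [IsFiniteMeasure μ] {f : X → ℝ}

lemma integrable_max_sub_zero (hf : Integrable f μ) (α : ℝ) :
    Integrable (fun x => max (f x - α) 0) μ :=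
  (hf.sub (integrable_const α)).pos_part

lemma integral_max_sub_le_half_integral_abs_sub_average (hf : Integrable f μ) {α : ℝ}
    (hα : ⨍ x, f x ∂μ ≤ α) :
    ∫ x, max (f x - α) 0 ∂μ ≤ (∫ x, |f x - ⨍ y, f y ∂μ| ∂μ) / 2 := by
  set m := ⨍ y, f y ∂μ
  have hfm : Integrable (fun x => f x - m) μ := hf.sub (integrable_const m)
  have max_sub_le (x : X) : max (f x - α) 0 ≤ (|f x - m| + (f x - m)) / 2 := by
    rcases abs_cases (f x - m) with h | h <;> apply max_le <;> linarith
  calc ∫ x, max (f x - α) 0 ∂μ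
      ≤ ∫ x, (|f x - m| + (f x - m)) / 2 ∂μ :=
        integral_mono (integrable_max_sub_zero hf α) ((hfm.abs.add hfm).div_const 2) max_sub_le
    _ = (∫ x, |f x - m| ∂μ) / 2 := by
        rw [integral_div, integral_add hfm.abs hfm, integral_sub_average, add_zero]

lemma setIntegral_sub_const_le_integral_max_sub (hf : Integrable f μ) (a : ℝ) (s : Set X) :
    ∫ x in s, (f x - a) ∂μ ≤ ∫ x, max (f x - a) 0 ∂μ :=
  calc ∫ x in s, (f x - a) ∂μ
      ≤ ∫ x in s, max (f x - a) 0 ∂μ :=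
        integral_mono (hf.sub (integrable_const a)).restrict
          (integrable_max_sub_zero hf a).restrict fun _ => le_max_left _ _
    _ ≤ ∫ x, max (f x - a) 0 ∂μ :=
        setIntegral_le_integral (integrable_max_sub_zero hf a)
          (Eventually.of_forall fun _ => le_max_right _ _)

lemma sub_mul_le_integral_max_sub_of_le_measureReal (hf : Integrable f μ) {a lam t : ℝ}
    (ht : 0 ≤ t) (hlam : t ≤ μ.real {x | lam < f x}) :
    (lam - a) * t ≤ ∫ x, max (f x - a) 0 ∂μ := by
  have max_nonneg : ∀ᵐ x ∂μ, 0 ≤ max (f x - a) 0 := Eventually.of_forall fun _ => le_max_right _ _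
  rcases le_total lam a with hle | hle
  · exact (mul_nonpos_of_nonpos_of_nonneg (sub_nonpos.2 hle) ht).trans
      (integral_nonneg_of_ae max_nonneg)
  have superlevel_subset : {x | lam < f x} ⊆ {x | lam - a ≤ max (f x - a) 0} := fun x hx =>
    (sub_le_sub_right (le_of_lt hx) a).trans (le_max_left _ _)
  calc (lam - a) * t
      ≤ (lam - a) * μ.real {x | lam - a ≤ max (f x - a) 0} :=
        mul_le_mul_of_nonneg_left (hlam.trans (measureReal_mono superlevel_subset))
          (sub_nonneg.2 hle)
    _ ≤ ∫ x, max (f x - a) 0 ∂μ :=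
        mul_meas_ge_le_integral_of_nonneg max_nonneg (integrable_max_sub_zero hf a) _

end Excess

lemma exists_nat_mul_exp_one_add_mul_exp_neg_le {s : ℝ} (hs : 1 ≤ s) :
    ∃ k : ℕ, k * exp 1 + s * exp (-k) ≤ exp 1 * log (exp 1 * s) := by
  have hs_pos : 0 < s := zero_lt_one.trans_le hs
  refine ⟨⌊log s⌋₊, ?_⟩
  have floor_le : (⌊log s⌋₊ : ℝ) ≤ log s := Nat.floor_le (log_nonneg hs)
  have mul_exp_le : s * exp (-⌊log s⌋₊) ≤ exp 1 := by
    nth_rw 1 [← exp_log hs_pos]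
    rw [← exp_add, exp_le_exp]
    linarith [Nat.lt_floor_add_one (log s)]
  rw [log_mul (exp_ne_zero 1) hs_pos.ne', log_exp]
  linarith [mul_le_mul_of_nonneg_right floor_le (exp_pos 1).le]

/-- A sequence of successively finer measurable partitions of `X`. The partition of generation `k`
is encoded by the map `index k` sending a point to the label of the cell containing it. -/
structure NestedPartitions (X ι : Type*) [MeasurableSpace X] [MeasurableSpace ι] where
  index : ℕ → X → ι
  measurable_index : ∀ k, Measurable (index k)
  index_eq_of_index_succ_eq : ∀ {k x y}, index (k + 1) x = index (k + 1) y → index k x = index k y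

namespace NestedPartitions

variable {X ι : Type*} [MeasurableSpace X] [MeasurableSpace ι] (P : NestedPartitions X ι)

/-- The cell of generation `k` containing `x`. -/
def cell (k : ℕ) (x : X) : Set X := {y | P.index k y = P.index k x}

/-- Passing from a cell to a child shrinks the measure by a factor of at most `D`. -/
def IsDoubling (μ : Measure X) (D : ℝ) : Prop :=
  ∀ k x, μ.real (P.cell k x) ≤ D * μ.real (P.cell (k + 1) x)

/-- The mean oscillation of `f` over each cell is at most `M`, i.e. the `BMO` seminorm of `f` with
respect to `P` is at most `M`. Null cells only require `0 ≤ M`, as averages over them are `0`. -/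
def MeanOscLE (μ : Measure X) (f : X → ℝ) (M : ℝ) : Prop :=
  ∀ k x, ⨍ y in P.cell k x, |f y - ⨍ z in P.cell k x, f z ∂μ| ∂μ ≤ M

/-- Lebesgue's differentiation theorem holds for `f` along the cells. -/
def Differentiates (μ : Measure X) (f : X → ℝ) : Prop :=
  ∀ᵐ x ∂μ, Tendsto (fun k => ⨍ y in P.cell k x, f y ∂μ) atTop (𝓝 (f x))

lemma mem_cell_self (k : ℕ) (x : X) : x ∈ P.cell k x := rfl

variable {P}

lemma cell_eq_of_mem {k : ℕ} {x y : X} (h : y ∈ P.cell k x) : P.cell k y = P.cell k x := by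
  ext z
  exact Eq.congr_right h

variable (P) in
lemma antitone_cell (x : X) : Antitone fun k => P.cell k x :=
  antitone_nat_of_succ_le fun _ _ hy => P.index_eq_of_index_succ_eq hy

section Stopping

/-- The points lying in some cell `Q` that is selected, i.e. with `S k Q` for its generation `k`. -/
def selectedUnion (P : NestedPartitions X ι) (S : ℕ → Set X → Prop) : Set X :=
  {x | ∃ k, S k (P.cell k x)}

/-- The points whose first selected cell is the one of generation `p.1` and label `p.2`: either this
maximal selected cell or empty. -/
def firstSelected (P : NestedPartitions X ι) (S : ℕ → Set X → Prop) (p : ℕ × ι) : Set X :=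
  {x | P.index p.1 x = p.2 ∧ S p.1 (P.cell p.1 x) ∧ ∀ j < p.1, ¬ S j (P.cell j x)}

variable {S : ℕ → Set X → Prop}

lemma firstSelected_eq_cell {p : ℕ × ι} {x : X} (hx : x ∈ P.firstSelected S p) :
    P.firstSelected S p = P.cell p.1 x := by
  obtain ⟨hp, hsel, hfirst⟩ := hx
  ext y
  refine ⟨fun hy => hy.1.trans hp.symm, fun hy => ⟨hy.trans hp, ?_, fun j hj => ?_⟩⟩
  · rwa [cell_eq_of_mem hy]
  · rw [cell_eq_of_mem (P.antitone_cell x hj.le hy)]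
    exact hfirst j hj

lemma pairwise_disjoint_firstSelected : Pairwise (Function.onFun Disjoint (P.firstSelected S)) := by
  rintro ⟨k, i⟩ ⟨l, j⟩ hne
  refine Set.disjoint_left.2 fun x ⟨hi, hk, hk'⟩ ⟨hj, hl, hl'⟩ => hne ?_
  obtain rfl : k = l := le_antisymm (not_lt.1 fun h => hk' l h hl) (not_lt.1 fun h => hl' k h hk)
  exact Prod.ext rfl (hi.symm.trans hj)

lemma iUnion_firstSelected : ⋃ p, P.firstSelected S p = P.selectedUnion S := by
  classical
  ext x
  refine ⟨fun hx => ?_, fun hx => ?_⟩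
  · obtain ⟨p, -, hp, -⟩ := mem_iUnion.1 hx
    exact ⟨p.1, hp⟩
  · have hx' : ∃ k, S k (P.cell k x) := hx
    exact mem_iUnion.2 ⟨(Nat.find hx', P.index (Nat.find hx') x), rfl, Nat.find_spec hx',
      fun _ => Nat.find_min hx'⟩

variable [MeasurableSingletonClass ι]

variable (P) in
lemma measurableSet_cell (k : ℕ) (x : X) : MeasurableSet (P.cell k x) :=
  P.measurable_index k (measurableSet_singleton _)

lemma measurableSet_firstSelected (p : ℕ × ι) : MeasurableSet (P.firstSelected S p) := by
  rcases (P.firstSelected S p).eq_empty_or_nonempty with h | ⟨x, hx⟩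
  · exact h ▸ MeasurableSet.empty
  · exact firstSelected_eq_cell hx ▸ P.measurableSet_cell p.1 x

variable [Countable ι]

lemma measurableSet_selectedUnion : MeasurableSet (P.selectedUnion S) :=
  iUnion_firstSelected (P := P) ▸ MeasurableSet.iUnion measurableSet_firstSelected

lemma setIntegral_selectedUnion_nonneg {μ : Measure X} {h : X → ℝ} (hh : Integrable h μ)
    (h_nonneg : ∀ k x, S k (P.cell k x) → (∀ j < k, ¬ S j (P.cell j x)) →
      0 ≤ ∫ y in P.cell k x, h y ∂μ) :
    0 ≤ ∫ x in P.selectedUnion S, h x ∂μ := by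
  rw [← iUnion_firstSelected]
  refine (hasSum_integral_iUnion measurableSet_firstSelected pairwise_disjoint_firstSelected
    hh.integrableOn).nonneg fun p => ?_
  rcases (P.firstSelected S p).eq_empty_or_nonempty with hempty | ⟨x, hx⟩
  · simp [hempty]
  · rw [firstSelected_eq_cell hx]
    exact h_nonneg p.1 x hx.2.1 hx.2.2

end Stopping

section CalderonZygmund

variable {μ : Measure X} {f : X → ℝ} {α D M : ℝ}

/-- The Calderón–Zygmund set at level `α`: the union of the cells over which `f` averages more than
`α`. -/
def czSet (P : NestedPartitions X ι) (μ : Measure X) (f : X → ℝ) (α : ℝ) : Set X :=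
  P.selectedUnion fun _ Q => α < ⨍ y in Q, f y ∂μ

/-- The union of the cells having a child over which `f` averages more than `α`. -/
def czParentSet (P : NestedPartitions X ι) (μ : Measure X) (f : X → ℝ) (α : ℝ) : Set X :=
  P.selectedUnion fun k Q => ∃ y ∈ Q, α < ⨍ z in P.cell (k + 1) y, f z ∂μ

lemma setAverage_cell_le_of_forall_lt_not_parent (hroot : ∀ x, ⨍ y in P.cell 0 x, f y ∂μ ≤ α)
    {k : ℕ} {x : X}
    (h : ∀ j < k, ¬ ∃ y ∈ P.cell j x, α < ⨍ z in P.cell (j + 1) y, f z ∂μ) :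
    ⨍ y in P.cell k x, f y ∂μ ≤ α := by
  cases k with
  | zero => exact hroot x
  | succ k => exact not_lt.1 fun hlt => h k k.lt_succ_self ⟨x, P.mem_cell_self k x, hlt⟩

lemma ae_le_of_notMem_czParentSet (hroot : ∀ x, ⨍ y in P.cell 0 x, f y ∂μ ≤ α)
    (hdiff : P.Differentiates μ f) :
    ∀ᵐ x ∂μ, x ∉ P.czParentSet μ f α → f x ≤ α := by
  filter_upwards [hdiff] with x hx hnot
  exact le_of_tendsto' hx fun k =>
    setAverage_cell_le_of_forall_lt_not_parent hroot fun j _ hj => hnot ⟨j, hj⟩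

variable [IsFiniteMeasure μ]

lemma setIntegral_cell_max_sub_le (hf : Integrable f μ) (hosc : P.MeanOscLE μ f M)
    {k : ℕ} {x : X} (hα : ⨍ y in P.cell k x, f y ∂μ ≤ α) :
    ∫ y in P.cell k x, max (f y - α) 0 ∂μ ≤ M / 2 * μ.real (P.cell k x) := by
  have half_osc := integral_max_sub_le_half_integral_abs_sub_average hf.restrict hα
  have osc_le :=
    mul_le_mul_of_nonneg_left (hosc k x) (measureReal_nonneg (μ := μ) (s := P.cell k x))
  rw [← smul_eq_mul, measure_smul_setAverage _ (measure_ne_top μ _)] at osc_le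
  linarith

lemma measureReal_cell_le_of_parent (hD : 0 ≤ D) (hdbl : P.IsDoubling μ D)
    {k : ℕ} {x : X} (hparent : ∃ y ∈ P.cell k x, α < ⨍ z in P.cell (k + 1) y, f z ∂μ) :
    μ.real (P.cell k x) ≤ D * μ.real (P.cell k x ∩ P.czSet μ f α) := by
  obtain ⟨y, hy, hlt⟩ := hparent
  have child_subset : P.cell (k + 1) y ⊆ P.cell k x ∩ P.czSet μ f α := fun z hz =>
    ⟨cell_eq_of_mem hy ▸ P.antitone_cell y k.le_succ hz, k + 1, by rwa [cell_eq_of_mem hz]⟩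
  calc μ.real (P.cell k x) = μ.real (P.cell k y) := by rw [cell_eq_of_mem hy]
    _ ≤ D * μ.real (P.cell (k + 1) y) := hdbl k y
    _ ≤ D * μ.real (P.cell k x ∩ P.czSet μ f α) :=
        mul_le_mul_of_nonneg_left (measureReal_mono child_subset) hD

variable [MeasurableSingletonClass ι] [Countable ι]

lemma sub_mul_measureReal_czSet_le (hf : Integrable f μ) (a : ℝ) :
    (α - a) * μ.real (P.czSet μ f α) ≤ ∫ x, max (f x - a) 0 ∂μ := by
  have setIntegral_sub_const (c : ℝ) (s : Set X) :
      ∫ x in s, (f x - c) ∂μ = ∫ x in s, f x ∂μ - c * μ.real s := by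
    rw [integral_sub hf.restrict (integrable_const c), setIntegral_const, smul_eq_mul, mul_comm]
  have excess_nonneg : 0 ≤ ∫ x in P.czSet μ f α, (f x - α) ∂μ := by
    refine setIntegral_selectedUnion_nonneg (hf.sub (integrable_const α)) fun k x hsel _ => ?_
    rw [setIntegral_sub_const, ← measure_smul_setAverage f (measure_ne_top μ _), smul_eq_mul,
      mul_comm α, ← mul_sub]
    exact mul_nonneg measureReal_nonneg (sub_nonneg.2 hsel.le)
  have excess_le := setIntegral_sub_const_le_integral_max_sub hf a (P.czSet μ f α)
  rw [setIntegral_sub_const] at excess_nonneg excess_le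
  linarith

lemma integral_max_sub_le_mul_measureReal_czSet (hf : Integrable f μ) (hD : 0 ≤ D) (hM : 0 ≤ M)
    (hdbl : P.IsDoubling μ D) (hosc : P.MeanOscLE μ f M) (hdiff : P.Differentiates μ f)
    (hroot : ∀ x, ⨍ y in P.cell 0 x, f y ∂μ ≤ α) :
    ∫ x, max (f x - α) 0 ∂μ ≤ D * M / 2 * μ.real (P.czSet μ f α) := by
  set E := P.czSet μ f α
  set U := P.czParentSet μ f α
  have hE : MeasurableSet E := measurableSet_selectedUnion
  have indicator_integrable : Integrable (E.indicator fun _ => D * M / 2) μ :=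
    (integrable_const _).indicator hE
  have excess_integrable := integrable_max_sub_zero hf α
  have setIntegral_indicator_const (s : Set X) :
      ∫ x in s, E.indicator (fun _ => D * M / 2) x ∂μ = D * M / 2 * μ.real (s ∩ E) := by
    rw [setIntegral_indicator hE, setIntegral_const, smul_eq_mul, mul_comm]
  have nonneg_on_parents :
      0 ≤ ∫ x in U, (E.indicator (fun _ => D * M / 2) x - max (f x - α) 0) ∂μ := by
    refine setIntegral_selectedUnion_nonneg (indicator_integrable.sub excess_integrable)
      fun k x hparent hfirst => ?_
    rw [integral_sub indicator_integrable.restrict excess_integrable.restrict,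
      setIntegral_indicator_const]
    have excess_le := setIntegral_cell_max_sub_le hf hosc
      (setAverage_cell_le_of_forall_lt_not_parent hroot hfirst)
    have measure_le := mul_le_mul_of_nonneg_left
      (measureReal_cell_le_of_parent hD hdbl hparent) (div_nonneg hM zero_le_two)
    linarith
  rw [integral_sub indicator_integrable.restrict excess_integrable.restrict,
    setIntegral_indicator_const] at nonneg_on_parents
  calc ∫ x, max (f x - α) 0 ∂μ = ∫ x in U, max (f x - α) 0 ∂μ := by
        refine (setIntegral_eq_integral_of_ae_compl_eq_zero ?_).symm
        filter_upwards [ae_le_of_notMem_czParentSet hroot hdiff] with x hx hxU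
        exact max_eq_right (sub_nonpos.2 (hx hxU))
    _ ≤ D * M / 2 * μ.real (U ∩ E) := sub_nonneg.1 nonneg_on_parents
    _ ≤ D * M / 2 * μ.real E :=
        mul_le_mul_of_nonneg_left (measureReal_mono inter_subset_right) (by positivity)

end CalderonZygmund

section JohnNirenberg

variable [MeasurableSingletonClass ι] [Countable ι] {μ : Measure X} [IsFiniteMeasure μ]
  {f : X → ℝ} {a D M : ℝ}

lemma exp_one_mul_integral_max_sub_add_le (hf : Integrable f μ) (hD : 0 ≤ D) (hM : 0 ≤ M)
    (hdbl : P.IsDoubling μ D) (hosc : P.MeanOscLE μ f M) (hdiff : P.Differentiates μ f)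
    (hroot : ∀ x, ⨍ y in P.cell 0 x, f y ∂μ ≤ a) :
    exp 1 * ∫ x, max (f x - (a + D * M / 2 * exp 1)) 0 ∂μ ≤ ∫ x, max (f x - a) 0 ∂μ := by
  set c := D * M / 2
  set α := a + c * exp 1
  have hα : a ≤ α := le_add_of_nonneg_right (by positivity)
  calc exp 1 * ∫ x, max (f x - α) 0 ∂μ
      ≤ exp 1 * (c * μ.real (P.czSet μ f α)) := by
        gcongr
        exact integral_max_sub_le_mul_measureReal_czSet hf hD hM hdbl hosc hdiff
          fun x => (hroot x).trans hα
    _ = (α - a) * μ.real (P.czSet μ f α) := by ring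
    _ ≤ ∫ x, max (f x - a) 0 ∂μ := sub_mul_measureReal_czSet_le hf a

lemma integral_max_sub_add_nat_mul_le (hf : Integrable f μ) (hD : 0 ≤ D) (hM : 0 ≤ M)
    (hdbl : P.IsDoubling μ D) (hosc : P.MeanOscLE μ f M) (hdiff : P.Differentiates μ f)
    (hroot : ∀ x, ⨍ y in P.cell 0 x, f y ∂μ ≤ a) (k : ℕ) :
    ∫ x, max (f x - (a + k * (D * M / 2 * exp 1))) 0 ∂μ
      ≤ D * M / 2 * μ.real univ * exp (-k) := by
  induction k with
  | zero =>
    have hczSet : μ.real (P.czSet μ f a) ≤ μ.real univ := measureReal_mono (subset_univ _)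
    simpa using (integral_max_sub_le_mul_measureReal_czSet hf hD hM hdbl hosc hdiff hroot).trans
      (mul_le_mul_of_nonneg_left hczSet (by positivity))
  | succ k ih =>
    have hroot' (x : X) : ⨍ y in P.cell 0 x, f y ∂μ ≤ a + k * (D * M / 2 * exp 1) :=
      (hroot x).trans (le_add_of_nonneg_right (by positivity))
    have step := (exp_one_mul_integral_max_sub_add_le hf hD hM hdbl hosc hdiff hroot').trans ih
    rwa [add_assoc, ← add_one_mul, ← le_div_iff₀' (exp_pos 1), mul_div_assoc _ (exp _), ← exp_sub,
      ← neg_add', ← Nat.cast_succ] at step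

theorem le_add_mul_log_of_le_measureReal_lt (hf : Integrable f μ) (hD : 0 ≤ D) (hM : 0 ≤ M)
    (hdbl : P.IsDoubling μ D) (hosc : P.MeanOscLE μ f M) (hdiff : P.Differentiates μ f)
    (hroot : ∀ x, ⨍ y in P.cell 0 x, f y ∂μ ≤ a) {t lam : ℝ} (ht : 0 < t)
    (hlam : t ≤ μ.real {x | lam < f x}) :
    lam ≤ a + D * M / 2 * exp 1 * log (exp 1 * (μ.real univ / t)) := by
  set c := D * M / 2
  have t_le_total : t ≤ μ.real univ := hlam.trans (measureReal_mono (subset_univ _))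
  obtain ⟨k, hk⟩ := exists_nat_mul_exp_one_add_mul_exp_neg_le ((one_le_div ht).2 t_le_total)
  have chebyshev : (lam - (a + k * (c * exp 1))) * t ≤ c * μ.real univ * exp (-k) :=
    (sub_mul_le_integral_max_sub_of_le_measureReal hf ht.le hlam).trans
      (integral_max_sub_add_nat_mul_le hf hD hM hdbl hosc hdiff hroot k)
  rw [← le_div_iff₀ ht, sub_le_iff_le_add'] at chebyshev
  calc lam ≤ a + k * (c * exp 1) + c * μ.real univ * exp (-k) / t := chebyshev
    _ = a + c * (k * exp 1 + μ.real univ / t * exp (-k)) := by ring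
    _ ≤ a + c * (exp 1 * log (exp 1 * (μ.real univ / t))) := by gcongr
    _ = a + c * exp 1 * log (exp 1 * (μ.real univ / t)) := by rw [mul_assoc]

end JohnNirenberg

end NestedPartitions

section ClosedDyadicCube

variable {n : ℕ}

/-- The closed cube `∏ᵢ [mᵢ 2⁻ᵏ, (mᵢ + 1) 2⁻ᵏ]`, `m ∈ ℤⁿ`, containing `x`; on a common face, the one
extending in the positive directions. -/
def closedDyadicCube (k : ℕ) (x : Fin n → ℝ) : Set (Fin n → ℝ) :=
  Icc (fun i => (⌊2 ^ k * x i⌋ : ℝ) / 2 ^ k) (fun i => ((⌊2 ^ k * x i⌋ : ℝ) + 1) / 2 ^ k)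

lemma mem_closedDyadicCube_self (k : ℕ) (x : Fin n → ℝ) : x ∈ closedDyadicCube k x :=
  ⟨fun _ => (div_le_iff₀' (by positivity)).2 (Int.floor_le _),
    fun _ => (le_div_iff₀' (by positivity)).2 (Int.lt_floor_add_one _).le⟩

lemma closedDyadicCube_eq_closedBall (k : ℕ) (x : Fin n → ℝ) :
    closedDyadicCube k x =
      Metric.closedBall (fun i => ((⌊2 ^ k * x i⌋ : ℝ) + 1 / 2) / 2 ^ k) (1 / 2 * (1 / 2) ^ k) := by
  rw [closedBall_pi _ (by positivity), closedDyadicCube, ← pi_univ_Icc]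
  congr! 2 with i
  rw [Real.closedBall_eq_Icc, one_div_pow]
  congr 1 <;> ring

lemma volume_real_closedDyadicCube (k : ℕ) (x : Fin n → ℝ) :
    volume.real (closedDyadicCube k x) = (((2 : ℝ) ^ k)⁻¹) ^ n := by
  rw [closedDyadicCube, Measure.real,
    Real.volume_Icc_pi_toReal fun i => by dsimp only; gcongr; simp]
  simp [add_div]

lemma ae_tendsto_setAverage_closedDyadicCube {f : (Fin n → ℝ) → ℝ} (hf : LocallyIntegrable f) :
    ∀ᵐ x, Tendsto (fun k => ⨍ y in closedDyadicCube k x, f y) atTop (𝓝 (f x)) := by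
  have radius_tendsto : Tendsto (fun k : ℕ => (1 / 2 : ℝ) * (1 / 2) ^ k) atTop (𝓝[>] 0) := by
    refine tendsto_nhdsWithin_iff.2 ⟨?_, Eventually.of_forall fun k => mem_Ioi.2 (by positivity)⟩
    rw [← mul_zero (1 / 2 : ℝ)]
    exact (tendsto_pow_atTop_nhds_zero_of_lt_one one_half_pos.le one_half_lt_one).const_mul _
  filter_upwards [IsUnifLocDoublingMeasure.ae_tendsto_average volume hf 1] with x hx
  simp only [closedDyadicCube_eq_closedBall]
  refine hx _ _ radius_tendsto (Eventually.of_forall fun k => ?_)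
  rw [one_mul, ← closedDyadicCube_eq_closedBall]
  exact mem_closedDyadicCube_self k x

lemma isDyadic_closedDyadicCube {x : Fin n → ℝ} (hx : ∀ i, x i ∈ Ico 0 1) (k : ℕ) :
    IsDyadic n (closedDyadicCube k x) := by
  have floor_eq (i : Fin n) : (⌊2 ^ k * x i⌋ : ℝ) = ⌊2 ^ k * x i⌋₊ :=
    (natCast_floor_eq_intCast_floor (mul_nonneg (by positivity) (hx i).1)).symm
  refine ⟨k, fun i => ⌊2 ^ k * x i⌋₊, fun i => ?_, by simp only [closedDyadicCube, floor_eq]⟩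
  refine (Nat.floor_lt (mul_nonneg (by positivity) (hx i).1)).2 ?_
  push_cast
  exact mul_lt_of_lt_one_right (by positivity) (hx i).2

lemma IsDyadic.subset_Q0 {Q : Set (Fin n → ℝ)} (hQ : IsDyadic n Q) : Q ⊆ Q0 n := by
  obtain ⟨k, m, hm, rfl⟩ := hQ
  refine Icc_subset_Icc (fun i => by simp only [Pi.zero_apply]; positivity) fun i => ?_
  rw [Pi.one_apply, div_le_one (by positivity)]
  exact_mod_cast hm i

end ClosedDyadicCube

section UnitCube

variable {n : ℕ} {f : (Fin n → ℝ) → ℝ}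

instance isProbabilityMeasure_volume_restrict_Q0 :
    IsProbabilityMeasure (volume.restrict (Q0 n)) :=
  ⟨by simp [Q0, Real.volume_Icc_pi]⟩

lemma isDyadic_Q0 : IsDyadic n (Q0 n) :=
  ⟨0, 0, by simp, by
    simp only [Q0, Pi.zero_apply, CharP.cast_eq_zero, zero_add, pow_zero, div_one]
    rfl⟩

lemma pi_Ico_ae_eq_Q0 : (univ.pi fun _ : Fin n => Ico (0 : ℝ) 1) =ᵐ[volume] Q0 n :=
  Measure.univ_pi_Ico_ae_eq_Icc

lemma avgOn_eq_setAverage (f : (Fin n → ℝ) → ℝ) (Q : Set (Fin n → ℝ)) :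
    avgOn f Q = ⨍ x in Q, f x :=
  (setAverage_eq volume f Q).symm

lemma oscOn_eq_setAverage (f : (Fin n → ℝ) → ℝ) (Q : Set (Fin n → ℝ)) :
    oscOn f Q = ⨍ x in Q, |f x - ⨍ y in Q, f y| := by
  rw [← avgOn_eq_setAverage, setAverage_eq]
  rfl

lemma oscOn_nonneg (f : (Fin n → ℝ) → ℝ) (Q : Set (Fin n → ℝ)) : 0 ≤ oscOn f Q :=
  mul_nonneg (inv_nonneg.2 ENNReal.toReal_nonneg) (integral_nonneg fun _ => abs_nonneg _)

lemma floor_two_pow_succ_mul_ediv_two (k : ℕ) (r : ℝ) : ⌊2 ^ (k + 1) * r⌋ / 2 = ⌊2 ^ k * r⌋ := by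
  rw [pow_succ', mul_assoc]
  exact Int.natCast_mul_floor_div_cancel two_ne_zero _

/-- The partitions of `[0,1)ⁿ` into half-open dyadic cubes of side `2⁻ᵏ`, extended periodically to
`ℝⁿ` so that no cell is null for the measure `volume.restrict (Q0 n)`. -/
def dyadicPartitions (n : ℕ) : NestedPartitions (Fin n → ℝ) (Fin n → ℤ) where
  index k x i := ⌊2 ^ k * Int.fract (x i)⌋
  measurable_index k := measurable_pi_lambda _ fun i =>
    Int.measurable_floor.comp (((measurable_pi_apply i).fract).const_mul _)
  index_eq_of_index_succ_eq {k x y} h := by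
    funext i
    rw [← floor_two_pow_succ_mul_ediv_two k, ← floor_two_pow_succ_mul_ediv_two k, congrFun h i]

lemma dyadicPartitions_cell_zero (x : Fin n → ℝ) : (dyadicPartitions n).cell 0 x = univ := by
  simp [NestedPartitions.cell, dyadicPartitions]

lemma dyadicPartitions_cell_inter_pi_Ico (k : ℕ) (x : Fin n → ℝ) :
    (dyadicPartitions n).cell k x ∩ univ.pi (fun _ => Ico 0 1) = univ.pi fun i =>
      Ico ((⌊2 ^ k * Int.fract (x i)⌋ : ℝ) / 2 ^ k) ((⌊2 ^ k * Int.fract (x i)⌋ + 1) / 2 ^ k) := by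
  have two_pow_pos : (0 : ℝ) < 2 ^ k := by positivity
  have pi_subset : (univ.pi fun i => Ico ((⌊2 ^ k * Int.fract (x i)⌋ : ℝ) / 2 ^ k)
      ((⌊2 ^ k * Int.fract (x i)⌋ + 1) / 2 ^ k)) ⊆ univ.pi fun _ => Ico 0 1 := by
    refine pi_mono fun i _ => Ico_subset_Ico ?_ ?_
    · have : 0 ≤ ⌊2 ^ k * Int.fract (x i)⌋ :=
        Int.floor_nonneg.2 (mul_nonneg two_pow_pos.le (Int.fract_nonneg _))
      positivity
    · rw [div_le_one two_pow_pos]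
      have : ⌊2 ^ k * Int.fract (x i)⌋ < 2 ^ k := Int.floor_lt.2 <| by
        push_cast
        exact mul_lt_of_lt_one_right two_pow_pos (Int.fract_lt_one _)
      exact_mod_cast this
  rw [← inter_eq_self_of_subset_left pi_subset]
  ext y
  refine and_congr_left fun hy => ?_
  have fract_eq (i : Fin n) : Int.fract (y i) = y i := Int.fract_eq_self.2 (hy i trivial)
  simp only [NestedPartitions.cell, dyadicPartitions, mem_ofPred_eq, funext_iff, fract_eq,
    Int.floor_eq_iff, mem_univ_pi, mem_Ico, div_le_iff₀' two_pow_pos, lt_div_iff₀' two_pow_pos]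

lemma restrict_Q0_restrict_cell (k : ℕ) (x : Fin n → ℝ) :
    (volume.restrict (Q0 n)).restrict ((dyadicPartitions n).cell k x)
      = volume.restrict (closedDyadicCube k fun i => Int.fract (x i)) := by
  rw [← Measure.restrict_congr_set pi_Ico_ae_eq_Q0,
    Measure.restrict_restrict ((dyadicPartitions n).measurableSet_cell k x),
    dyadicPartitions_cell_inter_pi_Ico]
  exact Measure.restrict_congr_set Measure.univ_pi_Ico_ae_eq_Icc

lemma isDoubling_dyadicPartitions :
    (dyadicPartitions n).IsDoubling (volume.restrict (Q0 n)) (2 ^ n) := by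
  intro k x
  have measureReal_cell (j : ℕ) :
      (volume.restrict (Q0 n)).real ((dyadicPartitions n).cell j x) = (((2 : ℝ) ^ j)⁻¹) ^ n := by
    rw [← measureReal_restrict_apply_univ, restrict_Q0_restrict_cell,
      measureReal_restrict_apply_univ, volume_real_closedDyadicCube]
  rw [measureReal_cell, measureReal_cell, ← mul_pow, pow_succ', mul_inv,
    mul_inv_cancel_left₀ two_ne_zero]

lemma meanOscLE_dyadicPartitions {M : ℝ} (hM : ∀ Q, IsDyadic n Q → oscOn f Q ≤ M) :
    (dyadicPartitions n).MeanOscLE (volume.restrict (Q0 n)) f M := by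
  intro k x
  rw [restrict_Q0_restrict_cell, ← oscOn_eq_setAverage]
  exact hM _ (isDyadic_closedDyadicCube (fun i => ⟨Int.fract_nonneg _, Int.fract_lt_one _⟩) k)

lemma differentiates_dyadicPartitions (hf : IntegrableOn f (Q0 n)) :
    (dyadicPartitions n).Differentiates (volume.restrict (Q0 n)) f := by
  have measurableSet_pi_Ico : MeasurableSet (univ.pi fun _ : Fin n => Ico (0 : ℝ) 1) :=
    MeasurableSet.univ_pi fun _ => measurableSet_Ico
  have indicator_locallyIntegrable : LocallyIntegrable ((Q0 n).indicator f) :=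
    (hf.integrable_indicator measurableSet_Icc).locallyIntegrable
  simp only [NestedPartitions.Differentiates, restrict_Q0_restrict_cell]
  rw [← Measure.restrict_congr_set pi_Ico_ae_eq_Q0, ae_restrict_iff' measurableSet_pi_Ico]
  filter_upwards [ae_tendsto_setAverage_closedDyadicCube indicator_locallyIntegrable] with x hx hx₀
  have cube_subset (k : ℕ) : closedDyadicCube k x ⊆ Q0 n :=
    (isDyadic_closedDyadicCube (fun i => hx₀ i trivial) k).subset_Q0
  rw [indicator_of_mem (cube_subset 0 (mem_closedDyadicCube_self 0 x))] at hx
  simp only [Int.fract_eq_self.2 (hx₀ _ trivial)]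
  refine hx.congr fun k => setAverage_congr_fun measurableSet_Icc ?_
  exact Eventually.of_forall fun y hy => indicator_of_mem (cube_subset k hy) f

end UnitCube

lemma IsRearrangement.le_measureReal_lt {n : ℕ} {f : (Fin n → ℝ) → ℝ} {g : ℝ → ℝ}
    (hg : IsRearrangement f g) {t lam : ℝ} (ht : t ∈ Ioc 0 1) (hlam : lam < g t) :
    t ≤ (volume.restrict (Q0 n)).real {x | lam < f x} := by
  obtain ⟨g_antitone, -, equimeasurable⟩ := hg
  have Ioc_subset : Ioc 0 t ⊆ {u ∈ Ioc (0 : ℝ) 1 | lam < g u} := fun u hu =>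
    have hu' : u ∈ Ioc (0 : ℝ) 1 := ⟨hu.1, hu.2.trans ht.2⟩
    ⟨hu', hlam.trans_le (g_antitone hu' ht hu.2)⟩
  refine (ENNReal.ofReal_le_iff_le_toReal (measure_ne_top _ _)).1 ?_
  calc ENNReal.ofReal t = volume (Ioc 0 t) := by rw [Real.volume_Ioc, sub_zero]
    _ ≤ volume {u ∈ Ioc (0 : ℝ) 1 | lam < g u} := measure_mono Ioc_subset
    _ = volume ({x | lam < f x} ∩ Q0 n) := by rw [equimeasurable, inter_comm]; rfl
    _ ≤ volume.restrict (Q0 n) {x | lam < f x} := Measure.le_restrict_apply _ _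

theorem rearrangement_log_bound_general (n : ℕ)
    (f : (Fin n → ℝ) → ℝ) (hf : IntegrableOn f (Q0 n))
    (M : ℝ) (hM : ∀ Q, IsDyadic n Q → oscOn f Q ≤ M)
    (fd : ℝ → ℝ) (hfd : IsRearrangement f fd) :
    ∀ t ∈ Set.Ioc (0:ℝ) 1,
      fd t ≤ avgOn f (Q0 n) + 2 ^ n / 2 * Real.exp 1 * M * Real.log (Real.exp 1 / t) := by
  intro t ht
  have hM₀ : 0 ≤ M := (oscOn_nonneg f (Q0 n)).trans (hM _ isDyadic_Q0)
  have hroot (x : Fin n → ℝ) :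
      ⨍ y in (dyadicPartitions n).cell 0 x, f y ∂volume.restrict (Q0 n) ≤ avgOn f (Q0 n) := by
    rw [dyadicPartitions_cell_zero, Measure.restrict_univ, avgOn_eq_setAverage]
  refine le_of_forall_lt_imp_le_of_dense fun lam hlam => ?_
  have bound := NestedPartitions.le_add_mul_log_of_le_measureReal_lt hf (by positivity) hM₀
    isDoubling_dyadicPartitions (meanOscLE_dyadicPartitions hM) (differentiates_dyadicPartitions hf)
    hroot ht.1 (hfd.le_measureReal_lt ht hlam)
  rw [probReal_univ, mul_one_div] at bound
  linarith

/-- **Theorem 3.1.** If `f ∈ BMO_𝒟([0,1]ⁿ)` with `∫_{Q₀} f = 0` and `Ω(f,Q) ≤ M` for all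
dyadic `Q`, then `f_d(t) ≤ 2ⁿ⁻¹ e M · ln(e/t)` for every `t ∈ (0,1]`. -/
theorem rearrangement_log_bound (n : ℕ) (hn : 1 ≤ n)
    (f : (Fin n → ℝ) → ℝ) (hf : IntegrableOn f (Q0 n))
    (hzero : ∫ x in Q0 n, f x = 0)
    (M : ℝ) (hM : ∀ Q, IsDyadic n Q → oscOn f Q ≤ M)
    (fd : ℝ → ℝ) (hfd : IsRearrangement f fd) :
    ∀ t ∈ Set.Ioc (0:ℝ) 1,
      fd t ≤ 2 ^ (n - 1) * Real.exp 1 * M * Real.log (Real.exp 1 / t) := by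
  intro t ht
  have bound := rearrangement_log_bound_general n f hf M hM fd hfd t ht
  rwa [avgOn, hzero, mul_zero, zero_add, ← pow_sub_one_mul (Nat.one_le_iff_ne_zero.1 hn),
    mul_div_cancel_right₀ _ two_ne_zero] at bound
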